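/- arXiv:2512.08248 — 6 statements merged into one kernel-verified Lean document; each statement's English description precedes it below -/
import Mathlib

section
/- Let n ≥ 1, let c : ℝ → ℝⁿ and r : ℝ → ℝ, let t_c > 0, let η ≤ 0, and let r_d > 0. Let S, T, Y ⊆ ℝⁿ and U : ℝ → Set(ℝⁿ) with U(t) open for each t. Suppose there are c_S, c_T, c_Y ∈ ℝⁿ and r_S, r_T, r_Y > 0 such that the closed ball B(c_S, r_S) ⊆ S, B(c_T, r_T) ⊆ T, B(c_Y, r_Y) ⊆ Y, and suppose: (a) c(0) = c_S and r(0) = r_S; (b) c(t_c) = c_T and r(t_c) = r_T; and for all t ∈ [0, t_c]: (c) ‖c(t) − c_Y‖ + r(t) − r_Y ≤ η; (d) −r(t) + r_d ≤ η; (e) −d(c(t), U(t)) + r(t) ≤ η. Then for all t ∈ [0, t_c]: r(t) > 0; the closed ball B(c(0), r(0)) ⊆ S; B(c(t_c), r(t_c)) ⊆ T; and B(c(t), r(t)) ⊆ Y \ U(t). -/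
open Metric Set

/-- Lemma 3.1: sufficient conditions for a time-varying ball to be a valid STT
for a temporal reach-avoid-stay task. -/
theorem stt_lemma (n : ℕ) (hn : 1 ≤ n)
    (c : ℝ → EuclideanSpace ℝ (Fin n)) (r : ℝ → ℝ)
    (tc : ℝ) (htc : 0 < tc) (η : ℝ) (hη : η ≤ 0) (rd : ℝ) (hrd : 0 < rd)
    (S T Y : Set (EuclideanSpace ℝ (Fin n)))
    (U : ℝ → Set (EuclideanSpace ℝ (Fin n)))
    (hU : ∀ t, IsOpen (U t))
    (cS cT cY : EuclideanSpace ℝ (Fin n)) (rS rT rY : ℝ)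
    (hrS : 0 < rS) (hrT : 0 < rT) (hrY : 0 < rY)
    (hSball : closedBall cS rS ⊆ S)
    (hTball : closedBall cT rT ⊆ T)
    (hYball : closedBall cY rY ⊆ Y)
    (ha1 : c 0 = cS) (ha2 : r 0 = rS)
    (hb1 : c tc = cT) (hb2 : r tc = rT)
    (hc : ∀ t ∈ Icc (0:ℝ) tc, ‖c t - cY‖ + r t - rY ≤ η)
    (hd : ∀ t ∈ Icc (0:ℝ) tc, -r t + rd ≤ η)
    (he : ∀ t ∈ Icc (0:ℝ) tc, -infDist (c t) (U t) + r t ≤ η) :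
    (∀ t ∈ Icc (0:ℝ) tc, 0 < r t) ∧
    closedBall (c 0) (r 0) ⊆ S ∧
    closedBall (c tc) (r tc) ⊆ T ∧
    (∀ t ∈ Icc (0:ℝ) tc, closedBall (c t) (r t) ⊆ Y \ U t) := by
  have hpos : ∀ t ∈ Icc (0:ℝ) tc, 0 < r t := fun t ht => by linarith [hd t ht]
  refine ⟨hpos, ?_, ?_, ?_⟩
  · rw [ha1, ha2]; exact hSball
  · rw [hb1, hb2]; exact hTball
  · intro t ht x hx
    refine ⟨hYball (closedBall_subset_closedBall' ?_ hx), ?_⟩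
    · rw [dist_eq_norm]; linarith [hc t ht]
    · have h1 : Disjoint (ball (c t) (r t)) (U t) :=
        disjoint_ball_infDist.mono_left (ball_subset_ball (by linarith [he t ht]))
      have h2 := h1.closure_left (hU t)
      rw [closure_ball _ (hpos t ht).ne'] at h2
      exact Set.disjoint_left.mp h2 hx
end

section
/- Let t_c > 0, let r : ℝ → ℝ be Lipschitz on [0, t_c] with constant L_r ≥ 0, let ε ≥ 0, let η̂ ∈ ℝ with η̂ + L_r·ε ≤ 0, and let r_d ∈ ℝ. Let F ⊆ [0, t_c] be a set of sample times such that (i) for every t ∈ [0, t_c] there exists s ∈ F with |t − s| ≤ ε, and (ii) −r(s) + r_d ≤ η̂ for every s ∈ F. Then r(t) ≥ r_d for all t ∈ [0, t_c]. -/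
open Set

/-- Claim (i) in the proof of Theorem 3.4: a minimum-radius constraint verified
at an ε-dense set of sample times extends to the whole horizon. -/
theorem radius_lower_bound_from_samples
    (tc : ℝ) (htc : 0 < tc) (r : ℝ → ℝ) (Lr : ℝ) (hLr : 0 ≤ Lr)
    (hLip : ∀ s ∈ Icc (0:ℝ) tc, ∀ t ∈ Icc (0:ℝ) tc, |r s - r t| ≤ Lr * |s - t|)
    (ε : ℝ) (hε : 0 ≤ ε) (ηh : ℝ) (hη : ηh + Lr * ε ≤ 0) (rd : ℝ)
    (F : Set ℝ) (hF : F ⊆ Icc (0:ℝ) tc)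
    (hdense : ∀ t ∈ Icc (0:ℝ) tc, ∃ s ∈ F, |t - s| ≤ ε)
    (hsample : ∀ s ∈ F, -r s + rd ≤ ηh) :
    ∀ t ∈ Icc (0:ℝ) tc, rd ≤ r t := by
  intro t ht
  obtain ⟨s, hs, hts⟩ := hdense t ht
  have h1 := hLip t ht s (hF hs)
  have h2 := mul_le_mul_of_nonneg_left hts hLr
  have h3 := neg_abs_le (r t - r s)
  have h4 := hsample s hs
  linarith
end

section
/- Let n ≥ 1 and t_c > 0. Let c : ℝ → ℝⁿ be Lipschitz on [0, t_c] with constant L_c ≥ 0 and r : ℝ → ℝ be Lipschitz on [0, t_c] with constant L_r ≥ 0. Let c_Y ∈ ℝⁿ, r_Y ∈ ℝ, ε ≥ 0, and η̂ ∈ ℝ with η̂ + (L_c + L_r)·ε ≤ 0. Let F ⊆ [0, t_c] be a set of sample times such that (i) for every t ∈ [0, t_c] there exists s ∈ F with |t − s| ≤ ε, and (ii) ‖c(s) − c_Y‖ + r(s) − r_Y ≤ η̂ for every s ∈ F. Then for all t ∈ [0, t_c], ‖c(t) − c_Y‖ + r(t) − r_Y ≤ 0, and hence the closed ball B(c(t),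 r(t)) is contained in the closed ball B(c_Y, r_Y). -/
open Metric Set

/-- Claim (ii) in the proof of Theorem 3.4: a state-space containment constraint
verified at an ε-dense set of sample times extends to the whole horizon. -/
theorem state_space_containment_from_samples
    (n : ℕ) (hn : 1 ≤ n) (tc : ℝ) (htc : 0 < tc)
    (c : ℝ → EuclideanSpace ℝ (Fin n)) (r : ℝ → ℝ)
    (Lc Lr : ℝ) (hLc : 0 ≤ Lc) (hLr : 0 ≤ Lr)
    (hLipc : ∀ s ∈ Icc (0:ℝ) tc, ∀ t ∈ Icc (0:ℝ) tc, ‖c s - c t‖ ≤ Lc * |s - t|)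
    (hLipr : ∀ s ∈ Icc (0:ℝ) tc, ∀ t ∈ Icc (0:ℝ) tc, |r s - r t| ≤ Lr * |s - t|)
    (cY : EuclideanSpace ℝ (Fin n)) (rY : ℝ)
    (ε : ℝ) (hε : 0 ≤ ε) (ηh : ℝ) (hη : ηh + (Lc + Lr) * ε ≤ 0)
    (F : Set ℝ) (hF : F ⊆ Icc (0:ℝ) tc)
    (hdense : ∀ t ∈ Icc (0:ℝ) tc, ∃ s ∈ F, |t - s| ≤ ε)
    (hsample : ∀ s ∈ F, ‖c s - cY‖ + r s - rY ≤ ηh) :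
    ∀ t ∈ Icc (0:ℝ) tc,
      ‖c t - cY‖ + r t - rY ≤ 0 ∧ closedBall (c t) (r t) ⊆ closedBall cY rY := by
  intro t ht
  obtain ⟨s, hs, hts⟩ := hdense t ht
  have h1 := hLipc t ht s (hF hs)
  have h2 := (le_abs_self _).trans (hLipr t ht s (hF hs))
  have h3 := hsample s hs
  have h4 : ‖c t - cY‖ ≤ ‖c t - c s‖ + ‖c s - cY‖ := norm_sub_le_norm_sub_add_norm_sub _ _ _
  have h5 := mul_le_mul_of_nonneg_left hts hLc
  have h6 := mul_le_mul_of_nonneg_left hts hLr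
  have key : ‖c t - cY‖ + r t - rY ≤ 0 := by linarith
  refine ⟨key, closedBall_subset_closedBall' ?_⟩
  rw [dist_eq_norm]
  linarith
end

section
/- Let n ≥ 1 and t_c > 0. Let c : ℝ → ℝⁿ be Lipschitz on [0, t_c] with constant L_c ≥ 0 and r : ℝ → ℝ be Lipschitz on [0, t_c] with constant L_r ≥ 0. Let D ⊆ ℝⁿ be a fixed set, let ε ≥ 0, and let η̂ ∈ ℝ with η̂ + (L_c + L_r)·ε ≤ 0. Let F ⊆ [0, t_c] be a set of sample times such that (i) for every t ∈ [0, t_c] there exists s ∈ F with |t − s| ≤ ε, and (ii) −d(c(s), D) + r(s) ≤ η̂ for every s ∈ F. Then r(t) ≤ d(c(t), D) for all t ∈ [0, t_c]. -/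
open Metric Set

/-- Claim (iii) in the proof of Theorem 3.4 (static unsafe set): an obstacle
avoidance constraint verified at an ε-dense set of sample times extends to the
whole horizon. -/
theorem obstacle_avoidance_from_samples
    (n : ℕ) (hn : 1 ≤ n) (tc : ℝ) (htc : 0 < tc)
    (c : ℝ → EuclideanSpace ℝ (Fin n)) (r : ℝ → ℝ)
    (Lc Lr : ℝ) (hLc : 0 ≤ Lc) (hLr : 0 ≤ Lr)
    (hLipc : ∀ s ∈ Icc (0:ℝ) tc, ∀ t ∈ Icc (0:ℝ) tc, ‖c s - c t‖ ≤ Lc * |s - t|)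
    (hLipr : ∀ s ∈ Icc (0:ℝ) tc, ∀ t ∈ Icc (0:ℝ) tc, |r s - r t| ≤ Lr * |s - t|)
    (D : Set (EuclideanSpace ℝ (Fin n)))
    (ε : ℝ) (hε : 0 ≤ ε) (ηh : ℝ) (hη : ηh + (Lc + Lr) * ε ≤ 0)
    (F : Set ℝ) (hF : F ⊆ Icc (0:ℝ) tc)
    (hdense : ∀ t ∈ Icc (0:ℝ) tc, ∃ s ∈ F, |t - s| ≤ ε)
    (hsample : ∀ s ∈ F, -infDist (c s) D + r s ≤ ηh) :
    ∀ t ∈ Icc (0:ℝ) tc, r t ≤ infDist (c t) D := by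
  intro t ht
  obtain ⟨s, hs, hts⟩ := hdense t ht
  have h1 := hLipc s (hF hs) t ht
  have h2 := (abs_le.mp (hLipr t ht s (hF hs))).2
  have h3 : infDist (c s) D ≤ infDist (c t) D + dist (c s) (c t) :=
    infDist_le_infDist_add_dist
  rw [dist_eq_norm] at h3
  rw [abs_sub_comm s t] at h1
  have h4 := mul_le_mul_of_nonneg_left hts hLc
  have h5 := mul_le_mul_of_nonneg_left hts hLr
  have h6 := hsample s hs
  linarith
end

section
/- Let n ≥ 1 and t_c > 0. Let c : ℝ → ℝⁿ be Lipschitz on [0, t_c] with constant L_c ≥ 0 and r : ℝ → ℝ be Lipschitz on [0, t_c] with constant L_r ≥ 0. Let U : ℝ → Set(ℝⁿ) be a time-varying set such that for some L_U ≥ 0 and all x ∈ ℝⁿ and all s, t ∈ [0, t_c], d(x, U(t)) ≥ d(x, U(s)) − L_U·|t − s|. Let ε ≥ 0 and η̂ ∈ ℝ with η̂ + (L_c + L_r + L_U)·ε ≤ 0. Let F ⊆ [0, t_c] be a set of sample times such that (i) for every t ∈ [0, t_c] there exists s ∈ F with |t − s| ≤ ε, and (ii) −d(c(s), U(s)) +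 r(s) ≤ η̂ for every s ∈ F. Then r(t) ≤ d(c(t), U(t)) for all t ∈ [0, t_c]. -/
open Metric Set

/-- Time-varying-obstacle version of claim (iii) in the proof of Theorem 3.4:
the unsafe set varies L_U-Lipschitz-continuously in time in the sense of
point-to-set distances. -/
theorem obstacle_avoidance_from_samples_time_varying
    (n : ℕ) (hn : 1 ≤ n) (tc : ℝ) (htc : 0 < tc)
    (c : ℝ → EuclideanSpace ℝ (Fin n)) (r : ℝ → ℝ)
    (Lc Lr : ℝ) (hLc : 0 ≤ Lc) (hLr : 0 ≤ Lr)
    (hLipc : ∀ s ∈ Icc (0:ℝ) tc, ∀ t ∈ Icc (0:ℝ) tc, ‖c s - c t‖ ≤ Lc * |s - t|)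
    (hLipr : ∀ s ∈ Icc (0:ℝ) tc, ∀ t ∈ Icc (0:ℝ) tc, |r s - r t| ≤ Lr * |s - t|)
    (U : ℝ → Set (EuclideanSpace ℝ (Fin n))) (LU : ℝ) (hLU : 0 ≤ LU)
    (hLipU : ∀ x : EuclideanSpace ℝ (Fin n), ∀ s ∈ Icc (0:ℝ) tc, ∀ t ∈ Icc (0:ℝ) tc,
      infDist x (U s) - LU * |t - s| ≤ infDist x (U t))
    (ε : ℝ) (hε : 0 ≤ ε) (ηh : ℝ) (hη : ηh + (Lc + Lr + LU) * ε ≤ 0)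
    (F : Set ℝ) (hF : F ⊆ Icc (0:ℝ) tc)
    (hdense : ∀ t ∈ Icc (0:ℝ) tc, ∃ s ∈ F, |t - s| ≤ ε)
    (hsample : ∀ s ∈ F, -infDist (c s) (U s) + r s ≤ ηh) :
    ∀ t ∈ Icc (0:ℝ) tc, r t ≤ infDist (c t) (U t) := by
  intro t ht
  obtain ⟨s, hs, hts⟩ := hdense t ht
  have h1 := hsample s hs
  have h2 := hLipU (c t) s (hF hs) t ht
  have h3 := (abs_le.mp (hLipr t ht s (hF hs))).2
  have h4 := hLipc s (hF hs) t ht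
  rw [abs_sub_comm s t, ← dist_eq_norm] at h4
  have h5 : infDist (c s) (U s) ≤ infDist (c t) (U s) + dist (c s) (c t) :=
    infDist_le_infDist_add_dist
  have e1 := mul_le_mul_of_nonneg_left hts hLc
  have e2 := mul_le_mul_of_nonneg_left hts hLr
  have e3 := mul_le_mul_of_nonneg_left hts hLU
  linarith
end

section
/- Let n ≥ 1 and t_c > 0. Let c : ℝ → ℝⁿ be Lipschitz on [0, t_c] with constant L_c ≥ 0 and r : ℝ → ℝ be Lipschitz on [0, t_c] with constant L_r ≥ 0. Let ε ≥ 0 and η̂ ∈ ℝ with η̂ + (L_c + L_r)·ε ≤ 0, and let r_d > 0. Let S, T, Y ⊆ ℝⁿ and let U ⊆ ℝⁿ be an open set. Suppose there are c_S, c_T, c_Y ∈ ℝⁿ and r_S, r_T, r_Y > 0 with B(c_S, r_S) ⊆ S, B(c_T, r_T) ⊆ T, B(c_Y, r_Y) ⊆ Y, and suppose: (a) c(0) = c_S and r(0) = r_S; (b) c(t_c) = c_T and r(t_c) = r_T; and there is a set F ⊆ [0, t_c] of sample times such that for every t ∈ [0, t_c] there exists s ∈ F with |t − s| ≤ ε,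 and for every s ∈ F: (c) ‖c(s) − c_Y‖ + r(s) − r_Y ≤ η̂; (d) −r(s) + r_d ≤ η̂; (e) −d(c(s), U) + r(s) ≤ η̂. Then for all t ∈ [0, t_c]: r(t) ≥ r_d > 0; B(c(0), r(0)) ⊆ S; B(c(t_c), r(t_c)) ⊆ T; and B(c(t), r(t)) ⊆ Y \ U. -/
open Metric Set

/-- Theorem 3.4 specialized to a static open unsafe set: a tube satisfying the
sampled constraints with margin ηh + (Lc + Lr)·ε ≤ 0 is a valid STT over the
whole continuous horizon. -/
theorem pinstt_validity
    (n : ℕ) (hn : 1 ≤ n) (tc : ℝ) (htc : 0 < tc)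
    (c : ℝ → EuclideanSpace ℝ (Fin n)) (r : ℝ → ℝ)
    (Lc Lr : ℝ) (hLc : 0 ≤ Lc) (hLr : 0 ≤ Lr)
    (hLipc : ∀ s ∈ Icc (0:ℝ) tc, ∀ t ∈ Icc (0:ℝ) tc, ‖c s - c t‖ ≤ Lc * |s - t|)
    (hLipr : ∀ s ∈ Icc (0:ℝ) tc, ∀ t ∈ Icc (0:ℝ) tc, |r s - r t| ≤ Lr * |s - t|)
    (ε : ℝ) (hε : 0 ≤ ε) (ηh : ℝ) (hη : ηh + (Lc + Lr) * ε ≤ 0)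
    (rd : ℝ) (hrd : 0 < rd)
    (S T Y : Set (EuclideanSpace ℝ (Fin n)))
    (U : Set (EuclideanSpace ℝ (Fin n))) (hU : IsOpen U)
    (cS cT cY : EuclideanSpace ℝ (Fin n)) (rS rT rY : ℝ)
    (hrS : 0 < rS) (hrT : 0 < rT) (hrY : 0 < rY)
    (hSball : closedBall cS rS ⊆ S)
    (hTball : closedBall cT rT ⊆ T)
    (hYball : closedBall cY rY ⊆ Y)
    (ha1 : c 0 = cS) (ha2 : r 0 = rS)
    (hb1 : c tc = cT) (hb2 : r tc = rT)
    (F : Set ℝ) (hF : F ⊆ Icc (0:ℝ) tc)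
    (hdense : ∀ t ∈ Icc (0:ℝ) tc, ∃ s ∈ F, |t - s| ≤ ε)
    (hc : ∀ s ∈ F, ‖c s - cY‖ + r s - rY ≤ ηh)
    (hd : ∀ s ∈ F, -r s + rd ≤ ηh)
    (he : ∀ s ∈ F, -infDist (c s) U + r s ≤ ηh) :
    (∀ t ∈ Icc (0:ℝ) tc, rd ≤ r t ∧ 0 < r t) ∧
    closedBall (c 0) (r 0) ⊆ S ∧
    closedBall (c tc) (r tc) ⊆ T ∧
    (∀ t ∈ Icc (0:ℝ) tc, closedBall (c t) (r t) ⊆ Y \ U) := by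
  have key : ∀ t ∈ Icc (0:ℝ) tc, rd ≤ r t ∧ ‖c t - cY‖ + r t ≤ rY ∧ r t ≤ infDist (c t) U := by
    intro t ht
    obtain ⟨s, hs, hts⟩ := hdense t ht
    have h1 := hLipc t ht s (hF hs)
    have h2 := abs_le.1 (hLipr t ht s (hF hs))
    have h3 : Lc * |t - s| ≤ Lc * ε := mul_le_mul_of_nonneg_left hts hLc
    have h4 : Lr * |t - s| ≤ Lr * ε := mul_le_mul_of_nonneg_left hts hLr
    have h5 : 0 ≤ Lc * ε := mul_nonneg hLc hε
    have hcs := hc s hs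
    have hds := hd s hs
    have hes := he s hs
    have h6 : ‖c t - cY‖ ≤ ‖c t - c s‖ + ‖c s - cY‖ := norm_sub_le_norm_sub_add_norm_sub _ _ _
    have h7 : infDist (c s) U ≤ infDist (c t) U + dist (c s) (c t) :=
      infDist_le_infDist_add_dist
    rw [dist_comm, dist_eq_norm] at h7
    have h8 : ηh + (Lc * ε + Lr * ε) ≤ 0 := by linarith
    refine ⟨?_, ?_, ?_⟩ <;> linarith [h2.1, h2.2]
  refine ⟨fun t ht => ⟨(key t ht).1, hrd.trans_le (key t ht).1⟩, ?_, ?_, ?_⟩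
  · rw [ha1, ha2]; exact hSball
  · rw [hb1, hb2]; exact hTball
  · intro t ht x hx
    obtain ⟨k1, k2, k3⟩ := key t ht
    have hr : r t ≠ 0 := (hrd.trans_le k1).ne'
    refine ⟨hYball ?_, fun hxU => ?_⟩
    · rw [mem_closedBall] at hx ⊢
      have := dist_triangle x (c t) cY
      rw [dist_eq_norm (c t)] at this
      linarith
    · rw [← closure_ball (c t) hr] at hx
      obtain ⟨y, hyU, hy⟩ := mem_closure_iff.1 hx U hU hxU
      have := infDist_le_dist_of_mem (x := c t) hyU
      rw [mem_ball, dist_comm] at hy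
      linarith
end
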